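/- Let r > 1 be a real number. There exists a positive integer N such that for every integer n ≥ N there exist a modulus m and a Dirichlet character χ modulo m such that the closure of σ_{r,ℚ,χ}(ℕ) has exactly n connected components; that is, ℤ_{≥N} ⊆ {C_{r,ℚ,χ} : χ a Dirichlet character}. -/

import Mathlib

/-- The twisted divisor function `σ_{r,ℚ,χ}(n) = ∑_{d ∣ n} χ(d) d^{-r}` on positive integers. -/
noncomputable def sigmaQ {m : ℕ} (χ : DirichletCharacter ℂ m) (r : ℝ) (n : ℕ) : ℂ :=
  ∑ d ∈ n.divisors, χ ((d : ℕ) : ZMod m) * (((d : ℝ) ^ (-r) : ℝ) : ℂ)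

/-!
Take for `χ` the principal character modulo the product of the odd primes below `y`. With
`x = 2 ^ (-r)`, `A j = 1 + x + ⋯ + x ^ j` and `L` the sum of `d ^ (-r)` over the `y`-rough `d`, the
values at `2 ^ j * k` with `k` odd lie in the block `[A j, A j * L]`. They are dense in it: going
through the primes `p ≥ y` in increasing order and choosing the exponent of each one greedily
approximates every number of the block, because `1 + p ^ (-r)` never exceeds the sum over the
`(p + 1)`-rough numbers. For large `p` this holds because `(p, 4p]` contains more than `4 ^ r`
primes.

If the blocks `j` and `j + 1` touch, then so do all later consecutive ones, hence the closure has as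
many components as there are blocks before touching begins, plus one. As `y → ∞`, `L` decreases
to `1` and this number tends to infinity. Since `x < 1 / 2`, passing from `y` to `y + 1` delays the
touching by at most one block, so that no large number of components is skipped.
-/

open Set Filter Topology

theorem card_connectedComponents_iUnion {X ι : Type*} [TopologicalSpace X] [Finite ι]
    {S : ι → Set X} (hclosed : ∀ i, IsClosed (S i)) (hconn : ∀ i, IsConnected (S i))
    (hdisj : Pairwise (Function.onFun Disjoint S)) :
    Nat.card (ConnectedComponents ↥(⋃ i, S i)) = Nat.card ι := by
  let U : ι → Set ↥(⋃ i, S i) := fun i => (↑) ⁻¹' S i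
  have hUclosed : ∀ i, IsClosed (U i) := fun i => (hclosed i).preimage continuous_subtype_val
  have hUdisj : Pairwise (Function.onFun Disjoint U) := fun i j hij => (hdisj hij).preimage _
  have hUunion : ⋃ i, U i = univ := by
    rw [← preimage_iUnion, Subtype.coe_preimage_self]
  have hUclopen : ∀ i, IsClopen (U i) := fun i => by
    refine ⟨hUclosed i, isClosed_compl_iff.1 ?_⟩
    have hcompl : (U i)ᶜ = ⋃ j : {j // j ≠ i}, U j := by
      refine Subset.antisymm (fun y hy => ?_) (iUnion_subset fun j =>
        (hUdisj j.2).subset_compl_right)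
      obtain ⟨j, hj⟩ := iUnion_eq_univ_iff.1 hUunion y
      exact mem_iUnion.2 ⟨⟨j, fun hji => hy (hji ▸ hj)⟩, hj⟩
    exact hcompl ▸ isClosed_iUnion_of_finite fun j => hUclosed j
  have hUconn : ∀ i, IsConnected (U i) := fun i => by
    have himage : ((↑) : ↥(⋃ i, S i) → X) '' U i = S i := by
      rw [Subtype.image_preimage_coe, inter_eq_right.2 (subset_iUnion S i)]
    refine ⟨?_, Topology.IsInducing.subtypeVal.isPreconnected_image.1 ?_⟩
    · exact (himage ▸ (hconn i).nonempty : (_ '' U i).Nonempty).of_image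
    · exact himage ▸ (hconn i).isPreconnected
  exact Nat.card_congr
    (ConnectedComponents.equivOfIsClopenOfIsConnected hUclopen hUdisj hUunion hUconn)

theorem card_connectedComponents_iUnion_Icc {ι α : Type*} [Finite ι] [LinearOrder ι]
    [ConditionallyCompleteLinearOrder α] [TopologicalSpace α] [OrderTopology α] [DenselyOrdered α]
    {a b : ι → α} (hab : ∀ i, a i ≤ b i) (hba : ∀ i j, i < j → b i < a j) :
    Nat.card (ConnectedComponents ↥(⋃ i, Icc (a i) (b i))) = Nat.card ι := by
  refine card_connectedComponents_iUnion (fun _ => isClosed_Icc)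
    (fun i => isConnected_Icc (hab i)) ?_
  refine (pairwise_disjoint_on _).2 fun i j hij => disjoint_left.2 fun t hi hj => ?_
  exact ((hi.2.trans_lt (hba i j hij)).trans_le hj.1).false

theorem card_connectedComponents_image {X Y : Type*} [TopologicalSpace X] [TopologicalSpace Y]
    {e : X → Y} (he : IsEmbedding e) (s : Set X) :
    Nat.card (ConnectedComponents ↥(e '' s)) = Nat.card (ConnectedComponents ↥s) := by
  let φ := he.homeomorphImage s
  have hfiber : ∀ y, IsConnected (φ ⁻¹' {y}) := fun y => by
    rw [← φ.image_symm, image_singleton]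
    exact isConnected_singleton
  exact (Nat.card_congr
    (φ.isQuotientMap.isCoinducing.connectedComponentsHomeomorph hfiber).toEquiv).symm

theorem exists_mem_Ico_of_tendsto {α : Type*} [LinearOrder α] [TopologicalSpace α]
    [OrderClosedTopology α] {a b : ℕ → α} {B z : α} {J : ℕ} (hab : ∀ j, J ≤ j → a (j + 1) ≤ b j)
    (hb : Tendsto b atTop (𝓝 B)) (haz : a J ≤ z) (hzB : z < B) : ∃ j, z ∈ Ico (a j) (b j) := by
  by_contra! hnot
  have ha : ∀ j, J ≤ j → a j ≤ z := fun j hj => by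
    induction j, hj using Nat.le_induction with
    | base => exact haz
    | succ j hj ih => exact (hab j hj).trans (not_lt.1 fun hzb => hnot j ⟨ih, hzb⟩)
  refine hzB.not_ge (le_of_tendsto hb ?_)
  filter_upwards [eventually_ge_atTop J] with j hj
  exact not_lt.1 fun hzb => hnot j ⟨ha j hj, hzb⟩

theorem Icc_subset_of_Ico_subset_of_isClosed {α : Type*} [LinearOrder α] [TopologicalSpace α]
    [OrderTopology α] [DenselyOrdered α] {s : Set α} {a b : α} (hs : IsClosed s) (ha : a ∈ s)
    (h : Ico a b ⊆ s) : Icc a b ⊆ s := by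
  rcases eq_or_ne a b with rfl | hab
  · rwa [Icc_self, singleton_subset_iff]
  · rw [← closure_Ico hab]
    exact hs.closure_subset_iff.2 h

/-- The partial sum `1 + x + ⋯ + x ^ j` of the geometric series, indexed by its last exponent, so
that it is the divisor sum of `p ^ j` for a completely multiplicative function with value `x` at
the prime `p`. -/
def geomSum (x : ℝ) (j : ℕ) : ℝ := ∑ i ∈ Finset.range (j + 1), x ^ i

section geomSum

variable {x L L' : ℝ}

theorem geomSum_zero (x : ℝ) : geomSum x 0 = 1 := by simp [geomSum]

theorem geomSum_succ (x : ℝ) (j : ℕ) : geomSum x (j + 1) = geomSum x j + x ^ (j + 1) :=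
  Finset.sum_range_succ _ _

theorem geomSum_mono (hx : 0 ≤ x) : Monotone (geomSum x) :=
  monotone_nat_of_le_succ fun j => by rw [geomSum_succ]; linarith [pow_nonneg hx (j + 1)]

theorem one_le_geomSum (hx : 0 ≤ x) (j : ℕ) : 1 ≤ geomSum x j :=
  (geomSum_zero x).ge.trans (geomSum_mono hx j.zero_le)

theorem tendsto_geomSum (hx : 0 ≤ x) (hx1 : x < 1) :
    Tendsto (geomSum x) atTop (𝓝 (1 - x)⁻¹) :=
  (tendsto_add_atTop_iff_nat 1).2 (hasSum_geometric_of_lt_one hx hx1).tendsto_sum_nat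

theorem geomSum_succ_succ_le_mul (hx : 0 ≤ x) (hL : 1 ≤ L) (hLL' : x * (L' - 1) ≤ L - 1) {j : ℕ}
    (h : geomSum x (j + 1) ≤ geomSum x j * L') :
    geomSum x (j + 2) ≤ geomSum x (j + 1) * L := by
  have hpow : x ^ (j + 1) ≤ geomSum x j * (L' - 1) := by linarith [geomSum_succ x j]
  have hsucc : geomSum x (j + 2) = geomSum x (j + 1) + x * x ^ (j + 1) := by
    rw [geomSum_succ, pow_succ' x (j + 1)]
  calc geomSum x (j + 2) ≤ geomSum x (j + 1) + x * (geomSum x j * (L' - 1)) := by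
        rw [hsucc]; gcongr
    _ = geomSum x (j + 1) + geomSum x j * (x * (L' - 1)) := by ring
    _ ≤ geomSum x (j + 1) + geomSum x j * (L - 1) := by
        gcongr
        linarith [one_le_geomSum hx j]
    _ ≤ geomSum x (j + 1) + geomSum x (j + 1) * (L - 1) := by
        have hmono := geomSum_mono hx j.le_succ
        gcongr
    _ = geomSum x (j + 1) * L := by ring

theorem geomSum_succ_le_mul_of_le (hx : 0 ≤ x) (hx1 : x ≤ 1) (hL : 1 ≤ L) {i j : ℕ} (hij : i ≤ j)
    (h : geomSum x (i + 1) ≤ geomSum x i * L) : geomSum x (j + 1) ≤ geomSum x j * L := by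
  induction j, hij using Nat.le_induction with
  | base => exact h
  | succ j _ ih =>
    exact geomSum_succ_succ_le_mul hx hL (mul_le_of_le_one_left (by linarith) hx1) ih

theorem exists_geomSum_mul_lt_and_le_mul (hx : 0 < x) (hx1 : x < 1) {L : ℕ → ℝ} {y₀ : ℕ}
    (hL : Tendsto L atTop (𝓝 1)) (hL1 : ∀ y, y₀ ≤ y → 1 < L y)
    (hstep : ∀ y, y₀ ≤ y → x * (L y - 1) ≤ L (y + 1) - 1) :
    ∃ N, ∀ j, N ≤ j → ∃ y, y₀ ≤ y ∧ geomSum x j * L y < geomSum x (j + 1) ∧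
      geomSum x (j + 2) ≤ geomSum x (j + 1) * L y := by
  have hgeom := tendsto_geomSum hx.le hx1
  have hinit : ∀ᶠ j in atTop, geomSum x (j + 1) ≤ geomSum x j * L y₀ := by
    have hlim : (1 - x)⁻¹ < (1 - x)⁻¹ * L y₀ :=
      lt_mul_of_one_lt_right (inv_pos.2 (by linarith)) (hL1 y₀ le_rfl)
    exact ((hgeom.comp (tendsto_add_atTop_nat 1)).eventually_lt (hgeom.mul_const _) hlim).mono
      fun _ => le_of_lt
  obtain ⟨N, hN⟩ := eventually_atTop.1 hinit
  refine ⟨N, fun j hj => ?_⟩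
  by_contra! hnot
  have htouch : ∀ y, y₀ ≤ y → geomSum x (j + 1) ≤ geomSum x j * L y := fun y hy => by
    induction y, hy using Nat.le_induction with
    | base => exact hN j hj
    | succ y hy ih =>
      by_contra! hlt
      exact (hnot (y + 1) (by lia) hlt).not_ge
        (geomSum_succ_succ_le_mul hx.le (hL1 _ (by lia)).le (hstep y hy) ih)
  have hle : geomSum x (j + 1) ≤ geomSum x j * 1 :=
    ge_of_tendsto (hL.const_mul _) ((eventually_ge_atTop y₀).mono htouch)
  linarith [geomSum_succ x j, pow_pos hx (j + 1)]

end geomSum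

/-- The `n`-rough numbers: the nonzero naturals all of whose prime factors are at least `n`. The
bound is inclusive, to complement `Nat.smoothNumbers n`, whose prime factors are less than `n`. -/
def roughNumbers (n : ℕ) : Set ℕ := {d | d ≠ 0 ∧ ∀ p, p.Prime → p ∣ d → n ≤ p}

section roughNumbers

variable {n p d k : ℕ}

theorem one_mem_roughNumbers (n : ℕ) : 1 ∈ roughNumbers n :=
  ⟨one_ne_zero, fun _ hp hp1 => (hp.not_dvd_one hp1).elim⟩

theorem prime_mem_roughNumbers (hp : p.Prime) (hnp : n ≤ p) : p ∈ roughNumbers n :=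
  ⟨hp.ne_zero, fun _ hq hqp => ((Nat.prime_dvd_prime_iff_eq hq hp).1 hqp).symm ▸ hnp⟩

theorem mul_mem_roughNumbers (hd : d ∈ roughNumbers n) (hk : k ∈ roughNumbers n) :
    d * k ∈ roughNumbers n :=
  ⟨mul_ne_zero hd.1 hk.1, fun p hp hpdk => (hp.dvd_mul.1 hpdk).elim (hd.2 p hp) (hk.2 p hp)⟩

theorem pow_mem_roughNumbers (hd : d ∈ roughNumbers n) (j : ℕ) : d ^ j ∈ roughNumbers n := by
  induction j with
  | zero => exact one_mem_roughNumbers n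
  | succ j ih => exact mul_mem_roughNumbers ih hd

theorem mem_roughNumbers_of_dvd (hd : d ∈ roughNumbers n) (hkd : k ∣ d) : k ∈ roughNumbers n :=
  ⟨ne_zero_of_dvd_ne_zero hd.1 hkd, fun p hp hpk => hd.2 p hp (hpk.trans hkd)⟩

theorem roughNumbers_anti : Antitone roughNumbers := fun _ _ hmn _ hd =>
  ⟨hd.1, fun p hp hpd => hmn.trans (hd.2 p hp hpd)⟩

theorem roughNumbers_two : roughNumbers 2 = {k | 0 < k} :=
  Set.ext fun _ => ⟨fun hk => Nat.pos_of_ne_zero hk.1, fun hk => ⟨hk.ne', fun _ hp _ => hp.two_le⟩⟩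

theorem mem_roughNumbers_succ : d ∈ roughNumbers (n + 1) ↔
    d ∈ roughNumbers n ∧ (n.Prime → ¬ n ∣ d) := by
  refine ⟨fun hd => ⟨roughNumbers_anti n.le_succ hd, fun hn hnd => ?_⟩,
    fun ⟨hd, hn⟩ => ⟨hd.1, fun p hp hpd => (hd.2 p hp hpd).lt_of_ne ?_⟩⟩
  · exact (hd.2 n hn hnd).not_gt n.lt_succ_self
  · rintro rfl
    exact hn hp hpd

theorem roughNumbers_succ (hn : ¬ n.Prime) : roughNumbers (n + 1) = roughNumbers n :=
  Set.ext fun _ => by simp [mem_roughNumbers_succ, hn]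

theorem mem_roughNumbers_succ_of_prime (hp : p.Prime) :
    d ∈ roughNumbers (p + 1) ↔ d ∈ roughNumbers p ∧ ¬ p ∣ d := by
  simp [mem_roughNumbers_succ, hp]

theorem roughNumbers_eq_union_image_mul (hp : p.Prime) :
    roughNumbers p = roughNumbers (p + 1) ∪ (p * ·) '' roughNumbers p := by
  ext d
  by_cases hpd : p ∣ d
  · obtain ⟨k, rfl⟩ := hpd
    simp only [mem_union, mem_roughNumbers_succ_of_prime hp, dvd_mul_right, not_true, and_false,
      false_or, (mul_right_injective₀ hp.ne_zero).mem_set_image]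
    exact ⟨fun hk => mem_roughNumbers_of_dvd hk (dvd_mul_left k p),
      mul_mem_roughNumbers (prime_mem_roughNumbers hp le_rfl)⟩
  · have himage : d ∉ (p * ·) '' roughNumbers p := by
      rintro ⟨k, -, rfl⟩
      exact hpd (dvd_mul_right p k)
    simp only [mem_union, mem_roughNumbers_succ_of_prime hp, hpd, himage, not_false_eq_true,
      and_true, or_false]

theorem disjoint_roughNumbers_image_mul (hp : p.Prime) :
    Disjoint (roughNumbers (p + 1)) ((p * ·) '' roughNumbers p) := by
  refine Set.disjoint_left.2 fun d hd => ?_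
  rintro ⟨k, -, rfl⟩
  exact ((mem_roughNumbers_succ_of_prime hp).1 hd).2 (dvd_mul_right p k)

end roughNumbers

/-- The sum of `f` over the `n`-rough numbers, which is the supremum of the divisor sums of
`n`-rough numbers if `f ≥ 0`. For completely multiplicative `f` it is the Euler product over the
primes `p ≥ n`. -/
noncomputable def roughSum (f : ℕ → ℝ) (n : ℕ) : ℝ := ∑' d : roughNumbers n, f d

section roughSum

variable {f : ℕ → ℝ} {n : ℕ}

theorem sum_le_roughSum (hf0 : ∀ d, 0 ≤ f d) (hf : Summable f) {s : Finset ℕ}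
    (hs : (s : Set ℕ) ⊆ roughNumbers n) : ∑ d ∈ s, f d ≤ roughSum f n := by
  calc ∑ d ∈ s, f d = ∑ d ∈ s, (roughNumbers n).indicator f d :=
        Finset.sum_congr rfl fun d hd => (indicator_of_mem (hs hd) f).symm
    _ ≤ ∑' d, (roughNumbers n).indicator f d :=
        (hf.indicator _).sum_le_tsum s fun d _ => indicator_nonneg (fun d _ => hf0 d) d
    _ = roughSum f n := (tsum_subtype _ f).symm

theorem roughSum_succ (hn : ¬ n.Prime) : roughSum f (n + 1) = roughSum f n := by
  rw [roughSum, roughNumbers_succ hn, roughSum]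

theorem tendsto_roughSum (hf : Summable f) : Tendsto (roughSum f) atTop (𝓝 (f 1)) := by
  have hpoint : ∀ d, ∀ᶠ n in atTop, (roughNumbers n).indicator f d = ({1} : Set ℕ).indicator f d :=
    fun d => by
    filter_upwards [eventually_gt_atTop d] with n hn
    have hmem : d ∈ roughNumbers n ↔ d ∈ ({1} : Set ℕ) := by
      refine ⟨fun hd => ?_, fun hd => hd ▸ one_mem_roughNumbers n⟩
      by_contra hd1
      obtain ⟨p, hp, hpd⟩ := Nat.exists_prime_and_dvd hd1
      exact ((hd.2 p hp hpd).trans (Nat.le_of_dvd (Nat.pos_of_ne_zero hd.1) hpd)).not_gt hn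
    exact indicator_eq_indicator hmem rfl
  have hlim := tendsto_tsum_of_dominated_convergence (𝓕 := atTop)
    (f := fun n => (roughNumbers n).indicator f) (g := ({1} : Set ℕ).indicator f) hf.norm
    (fun d => tendsto_const_nhds.congr' ((hpoint d).mono fun _ => Eq.symm))
    (.of_forall fun n d => norm_indicator_le_norm_self _ _)
  simp only [← tsum_subtype, tsum_singleton] at hlim
  exact hlim

end roughSum

section MonoidHom

variable {f : ℕ →* ℝ} {n p : ℕ}

theorem one_le_roughSum (hf0 : ∀ d, 0 ≤ f d) (hf : Summable f) (n : ℕ) : 1 ≤ roughSum f n := by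
  simpa using sum_le_roughSum (s := {1}) hf0 hf (by simpa using one_mem_roughNumbers n)

theorem roughSum_eq_add_mul (hf : Summable f) (hp : p.Prime) :
    roughSum f p = roughSum f (p + 1) + f p * roughSum f p := by
  calc roughSum f p = roughSum f (p + 1) + ∑' d : ((p * ·) '' roughNumbers p), f d := by
        rw [roughSum, tsum_congr_set_coe f (roughNumbers_eq_union_image_mul hp)]
        exact Summable.tsum_union_disjoint (disjoint_roughNumbers_image_mul hp)
          (hf.subtype _) (hf.subtype _)
    _ = roughSum f (p + 1) + f p * roughSum f p := by
        rw [tsum_image (fun d => f d) (mul_right_injective₀ hp.ne_zero).injOn]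
        simp only [map_mul, tsum_mul_left, roughSum]

theorem one_lt_roughSum (hf0 : ∀ d, 0 ≤ f d) (hf : Summable f) (hp : p.Prime) (hnp : n ≤ p)
    (hfp : 0 < f p) : 1 < roughSum f n := by
  have hrough : (↑({1, p} : Finset ℕ) : Set ℕ) ⊆ roughNumbers n := by
    rw [Finset.coe_pair, pair_subset_iff]
    exact ⟨one_mem_roughNumbers n, prime_mem_roughNumbers hp hnp⟩
  calc 1 < 1 + f p := lt_add_of_pos_right 1 hfp
    _ = ∑ d ∈ {1, p}, f d := by rw [Finset.sum_pair hp.ne_one.symm, map_one]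
    _ ≤ roughSum f n := sum_le_roughSum hf0 hf hrough

theorem mul_roughSum_sub_one_le (hf0 : ∀ d, 0 ≤ f d) (hf : Summable f)
    (htouch : 1 + f n ≤ roughSum f (n + 1)) {x : ℝ} (hx : 0 ≤ x) (hxn : 2 * x ≤ 1 - f n) :
    x * (roughSum f n - 1) ≤ roughSum f (n + 1) - 1 := by
  have hL := one_le_roughSum hf0 hf (n + 1)
  by_cases hn : n.Prime
  · have hfn : 0 < 1 - f n := by linarith [(le_abs_self _).trans_lt (hf.norm_lt_one hn.one_lt)]
    have heq : (1 - f n) * (roughSum f n - 1) = roughSum f (n + 1) - 1 + f n := by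
      linarith [roughSum_eq_add_mul hf hn]
    refine le_of_mul_le_mul_left ?_ hfn
    calc (1 - f n) * (x * (roughSum f n - 1)) = x * (roughSum f (n + 1) - 1 + f n) := by
          rw [← heq]; ring
      _ ≤ x * (2 * (roughSum f (n + 1) - 1)) := by
          gcongr
          linarith
      _ = 2 * x * (roughSum f (n + 1) - 1) := by ring
      _ ≤ (1 - f n) * (roughSum f (n + 1) - 1) := by
          gcongr
  · rw [roughSum_succ hn] at hL ⊢
    exact mul_le_of_le_one_left (by linarith) (by linarith [hf0 n])

end MonoidHom

/-- The sum of `f` over the divisors of `k`. For `f d = χ d * d ^ (-r)` with a principal character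
`χ` this is the real-valued version of `sigmaQ`. -/
def divisorSum (f : ℕ → ℝ) (k : ℕ) : ℝ := ∑ d ∈ k.divisors, f d

section divisorSum

variable {f : ℕ →* ℝ} {n p k : ℕ}

theorem divisorSum_one (f : ℕ →* ℝ) : divisorSum f 1 = 1 := by simp [divisorSum]

theorem divisorSum_mul {m : ℕ} (hmn : m.Coprime n) :
    divisorSum f (m * n) = divisorSum f m * divisorSum f n := by
  simp only [divisorSum, Nat.divisors_mul, Finset.mul_def, Finset.sum_image hmn.mul_injOn_divisors,
    map_mul, Finset.sum_mul_sum, Finset.sum_product]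

theorem divisorSum_prime_pow (hp : p.Prime) (j : ℕ) :
    divisorSum f (p ^ j) = geomSum (f p) j := by
  simp only [divisorSum, Nat.sum_divisors_prime_pow hp, map_pow, geomSum]

theorem divisorSum_prime_pow_mul (hp : p.Prime) (hpk : ¬ p ∣ k) (j : ℕ) :
    divisorSum f (p ^ j * k) = geomSum (f p) j * divisorSum f k := by
  rw [divisorSum_mul (((hp.coprime_iff_not_dvd).2 hpk).pow_left j), divisorSum_prime_pow hp]

theorem one_le_divisorSum (hf0 : ∀ d, 0 ≤ f d) (hk : k ≠ 0) : 1 ≤ divisorSum f k := by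
  rw [← map_one f]
  exact Finset.single_le_sum (fun d _ => hf0 d) (Nat.one_mem_divisors.2 hk)

theorem divisorSum_le_roughSum (hf0 : ∀ d, 0 ≤ f d) (hf : Summable f) (hk : k ∈ roughNumbers n) :
    divisorSum f k ≤ roughSum f n :=
  sum_le_roughSum hf0 hf fun _ hd =>
    mem_roughNumbers_of_dvd hk (Nat.dvd_of_mem_divisors (Finset.mem_coe.1 hd))

theorem tendsto_geomSum_mul_roughSum (hf0 : ∀ d, 0 ≤ f d) (hf : Summable f) (hp : p.Prime) :
    Tendsto (fun j => geomSum (f p) j * roughSum f (p + 1)) atTop (𝓝 (roughSum f p)) := by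
  have hfp : f p < 1 := (le_abs_self _).trans_lt (hf.norm_lt_one hp.one_lt)
  have hlim : (1 - f p)⁻¹ * roughSum f (p + 1) = roughSum f p := by
    rw [inv_mul_eq_iff_eq_mul₀ (by linarith)]
    linarith [roughSum_eq_add_mul hf hp]
  exact hlim ▸ (tendsto_geomSum (hf0 p) hfp).mul_const _

theorem exists_mem_Ico_geomSum_mul (hf0 : ∀ d, 0 ≤ f d) (hf : Summable f) (hp : p.Prime) {J : ℕ}
    (htouch : geomSum (f p) (J + 1) ≤ geomSum (f p) J * roughSum f (p + 1)) {F z : ℝ} (hF : 0 ≤ F)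
    (hz : z ∈ Ico (geomSum (f p) J * F) (roughSum f p * F)) :
    ∃ j, z ∈ Ico (geomSum (f p) j * F) (geomSum (f p) j * roughSum f (p + 1) * F) := by
  have hfp : f p ≤ 1 := (le_abs_self _).trans (hf.norm_lt_one hp.one_lt).le
  refine exists_mem_Ico_of_tendsto (fun j hj => ?_)
    ((tendsto_geomSum_mul_roughSum hf0 hf hp).mul_const F) hz.1 hz.2
  gcongr
  exact geomSum_succ_le_mul_of_le (hf0 p) hfp (one_le_roughSum hf0 hf _) hj htouch

theorem exists_mem_Ico_divisorSum (hf0 : ∀ d, 0 ≤ f d) (hf : Summable f)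
    (htouch : ∀ p, p.Prime → n ≤ p → 1 + f p ≤ roughSum f (p + 1)) {z : ℝ}
    (hz : z ∈ Ico 1 (roughSum f n)) {N : ℕ} (hnN : n ≤ N) :
    ∃ k ∈ roughNumbers n ∩ N.smoothNumbers,
      z ∈ Ico (divisorSum f k) (divisorSum f k * roughSum f N) := by
  induction N, hnN using Nat.le_induction with
  | base =>
    refine ⟨1, ⟨one_mem_roughNumbers n, Nat.mem_smoothNumbers'.2 fun q hq hq1 =>
      (hq.not_dvd_one hq1).elim⟩, ?_⟩
    rwa [divisorSum_one, one_mul]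
  | succ p hnp ih =>
    obtain ⟨k, ⟨hkn, hkp⟩, hzk⟩ := ih
    by_cases hp : p.Prime
    · have htouch₀ : geomSum (f p) (0 + 1) ≤ geomSum (f p) 0 * roughSum f (p + 1) := by
        rw [geomSum_succ, geomSum_zero, pow_one, one_mul]
        exact htouch p hp hnp
      have hF : 0 ≤ divisorSum f k := zero_le_one.trans (one_le_divisorSum hf0 hkn.1)
      obtain ⟨j, hj⟩ := exists_mem_Ico_geomSum_mul hf0 hf hp htouch₀ hF
        (by rwa [geomSum_zero, one_mul, mul_comm])
      refine ⟨p ^ j * k, ⟨mul_mem_roughNumbers (pow_mem_roughNumbers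
        (prime_mem_roughNumbers hp hnp) j) hkn, Nat.pow_mul_mem_smoothNumbers hp.ne_zero j hkp⟩, ?_⟩
      have hpk : ¬ p ∣ k := hp.coprime_iff_not_dvd.1 (hp.smoothNumbers_coprime hkp)
      rwa [divisorSum_prime_pow_mul hp hpk, mul_right_comm]
    · exact ⟨k, ⟨hkn, by rwa [Nat.smoothNumbers_succ hp]⟩, by rwa [roughSum_succ hp]⟩

theorem closure_divisorSum_image_roughNumbers (hf0 : ∀ d, 0 ≤ f d) (hf : Summable f)
    (htouch : ∀ p, p.Prime → n ≤ p → 1 + f p ≤ roughSum f (p + 1)) :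
    closure (divisorSum f '' roughNumbers n) = Icc 1 (roughSum f n) := by
  refine Subset.antisymm (closure_minimal ?_ isClosed_Icc) ?_
  · rintro _ ⟨k, hk, rfl⟩
    exact ⟨one_le_divisorSum hf0 hk.1, divisorSum_le_roughSum hf0 hf hk⟩
  refine Icc_subset_of_Ico_subset_of_isClosed isClosed_closure
    (subset_closure ⟨1, one_mem_roughNumbers n, divisorSum_one f⟩) fun z hz => ?_
  choose! k hk hzk using fun N (hN : n ≤ N) => exists_mem_Ico_divisorSum hf0 hf htouch hz hN
  have hR : Tendsto (fun N => z / roughSum f N) atTop (𝓝 (z / f 1)) :=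
    tendsto_const_nhds.div (tendsto_roughSum hf) (by simp)
  rw [map_one, div_one] at hR
  have hlim : Tendsto (fun N => divisorSum f (k N)) atTop (𝓝 z) := by
    refine tendsto_of_tendsto_of_tendsto_of_le_of_le' hR tendsto_const_nhds ?_ ?_ <;>
      filter_upwards [eventually_ge_atTop n] with N hN
    · exact (div_le_iff₀ (zero_lt_one.trans_le (one_le_roughSum hf0 hf N))).2 (hzk N hN).2.le
    · exact (hzk N hN).1
  refine mem_closure_of_tendsto hlim ?_
  filter_upwards [eventually_ge_atTop n] with N hN
  exact mem_image_of_mem _ (hk N hN).1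

theorem Icc_geomSum_subset_closure (hf0 : ∀ d, 0 ≤ f d) (hf : Summable f) (hp : p.Prime)
    (htouch : ∀ q, q.Prime → p < q → 1 + f q ≤ roughSum f (q + 1)) (j : ℕ) :
    Icc (geomSum (f p) j) (geomSum (f p) j * roughSum f (p + 1)) ⊆
      closure (divisorSum f '' roughNumbers p) := by
  have hA : 0 ≤ geomSum (f p) j := zero_le_one.trans (one_le_geomSum (hf0 p) j)
  calc Icc (geomSum (f p) j) (geomSum (f p) j * roughSum f (p + 1))
      = (geomSum (f p) j * ·) '' closure (divisorSum f '' roughNumbers (p + 1)) := by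
        rw [closure_divisorSum_image_roughNumbers hf0 hf htouch,
          image_mul_left_Icc hA (one_le_roughSum hf0 hf _), mul_one]
    _ ⊆ closure ((geomSum (f p) j * ·) '' (divisorSum f '' roughNumbers (p + 1))) :=
        image_closure_subset_closure_image (continuous_const_mul _)
    _ ⊆ closure (divisorSum f '' roughNumbers p) := closure_mono ?_
  rintro _ ⟨_, ⟨k, hk, rfl⟩, rfl⟩
  obtain ⟨hkp, hpk⟩ := (mem_roughNumbers_succ_of_prime hp).1 hk
  exact ⟨p ^ j * k, mul_mem_roughNumbers (pow_mem_roughNumbers (prime_mem_roughNumbers hp le_rfl) j)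
    hkp, divisorSum_prime_pow_mul hp hpk j⟩

theorem closure_divisorSum_image_roughNumbers_prime (hf0 : ∀ d, 0 ≤ f d) (hf : Summable f)
    (hp : p.Prime) (htouch : ∀ q, q.Prime → p < q → 1 + f q ≤ roughSum f (q + 1)) {J : ℕ}
    (htouchJ : geomSum (f p) (J + 1) ≤ geomSum (f p) J * roughSum f (p + 1)) :
    closure (divisorSum f '' roughNumbers p) = ⋃ j : Fin (J + 1), Icc (geomSum (f p) j)
      (if (j : ℕ) < J then geomSum (f p) j * roughSum f (p + 1) else roughSum f p) := by
  refine Subset.antisymm (closure_minimal ?_ (isClosed_iUnion_of_finite fun _ => isClosed_Icc))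
    (iUnion_subset fun j => ?_)
  · rintro _ ⟨k, hk, rfl⟩
    obtain ⟨j, k, hpk, rfl⟩ := Nat.exists_eq_pow_mul_and_not_dvd hk.1 p hp.ne_one
    have hk' : k ∈ roughNumbers (p + 1) := (mem_roughNumbers_succ_of_prime hp).2
      ⟨mem_roughNumbers_of_dvd hk (dvd_mul_left _ _), hpk⟩
    have hA : 0 ≤ geomSum (f p) j := zero_le_one.trans (one_le_geomSum (hf0 p) j)
    have hle : geomSum (f p) j ≤ divisorSum f (p ^ j * k) := by
      rw [divisorSum_prime_pow_mul hp hpk]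
      exact le_mul_of_one_le_right hA (one_le_divisorSum hf0 hk'.1)
    rcases lt_or_ge j J with hjJ | hJj
    · refine mem_iUnion.2 ⟨⟨j, by lia⟩, hle, ?_⟩
      rw [if_pos hjJ, divisorSum_prime_pow_mul hp hpk]
      gcongr
      exact divisorSum_le_roughSum hf0 hf hk'
    · refine mem_iUnion.2 ⟨Fin.last J, (geomSum_mono (hf0 p) hJj).trans hle, ?_⟩
      rw [Fin.val_last, if_neg J.lt_irrefl]
      exact divisorSum_le_roughSum hf0 hf hk
  · split_ifs with hjJ
    · exact Icc_geomSum_subset_closure hf0 hf hp htouch j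
    · refine Icc_subset_of_Ico_subset_of_isClosed isClosed_closure
        (subset_closure ⟨p ^ (j : ℕ), pow_mem_roughNumbers (prime_mem_roughNumbers hp le_rfl) _,
          divisorSum_prime_pow hp _⟩) fun z hz => ?_
      have hj : (j : ℕ) = J := by lia
      obtain ⟨i, hi⟩ := exists_mem_Ico_geomSum_mul hf0 hf hp htouchJ zero_le_one
        (by simpa only [mul_one, hj] using hz)
      simp only [mul_one] at hi
      exact Icc_geomSum_subset_closure hf0 hf hp htouch i (Ico_subset_Icc_self hi)

theorem card_connectedComponents_closure_divisorSum (hf0 : ∀ d, 0 ≤ f d) (hf : Summable f)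
    (hp : p.Prime) (htouch : ∀ q, q.Prime → p < q → 1 + f q ≤ roughSum f (q + 1)) {J : ℕ}
    (hsep : geomSum (f p) J * roughSum f (p + 1) < geomSum (f p) (J + 1))
    (htouchJ : geomSum (f p) (J + 2) ≤ geomSum (f p) (J + 1) * roughSum f (p + 1)) :
    Nat.card (ConnectedComponents ↥(closure (divisorSum f '' roughNumbers p))) = J + 2 := by
  have hfp : f p ≤ 1 := (le_abs_self _).trans (hf.norm_lt_one hp.one_lt).le
  have hL : 1 ≤ roughSum f (p + 1) := one_le_roughSum hf0 hf _
  rw [closure_divisorSum_image_roughNumbers_prime hf0 hf hp htouch htouchJ,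
    card_connectedComponents_iUnion_Icc (fun j => ?_) (fun i j hij => ?_), Nat.card_fin]
  · split_ifs
    · exact le_mul_of_one_le_right (zero_le_one.trans (one_le_geomSum (hf0 p) _)) hL
    · rw [← divisorSum_prime_pow hp]
      exact divisorSum_le_roughSum hf0 hf
        (pow_mem_roughNumbers (prime_mem_roughNumbers hp le_rfl) _)
  · have hij' : (i : ℕ) < j := hij
    rw [if_pos (by lia)]
    refine lt_of_lt_of_le (not_le.1 fun hle => hsep.not_ge ?_) (geomSum_mono (hf0 p) hij')
    exact geomSum_succ_le_mul_of_le (hf0 p) hfp hL (by lia) hle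

end divisorSum

/-- The twist of a completely multiplicative function by the principal character modulo `m`, kept
real-valued so that divisor sums can be compared. -/
noncomputable def principalTwist (f : ℕ →* ℝ) (m : ℕ) : ℕ →* ℝ where
  toFun := {d | d.Coprime m}.indicator f
  map_one' := by simp
  map_mul' d k := by
    simp only [indicator_apply, mem_ofPred_eq, Nat.coprime_mul_iff_left, map_mul, ite_and,
      ite_zero_mul_ite_zero]

theorem coe_principalTwist (f : ℕ →* ℝ) (m : ℕ) :
    ⇑(principalTwist f m) = {d | d.Coprime m}.indicator f := rfl

theorem principalTwist_nonneg {f : ℕ →* ℝ} (hf0 : ∀ d, 0 ≤ f d) (m d : ℕ) :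
    0 ≤ principalTwist f m d :=
  indicator_nonneg (fun d _ => hf0 d) d

theorem summable_principalTwist {f : ℕ →* ℝ} (hf : Summable f) (m : ℕ) :
    Summable (principalTwist f m) :=
  hf.indicator _

/-- The product of the primes in the interval `[a, b)`, used as a modulus: its principal character
kills exactly the primes in this interval. -/
def primeProd (a b : ℕ) : ℕ := ∏ p ∈ Finset.Ico a b with p.Prime, p

section primeProd

variable {a b d n p : ℕ}

theorem primeProd_pos (a b : ℕ) : 0 < primeProd a b :=
  Finset.prod_pos fun _ hp => (Finset.mem_filter.1 hp).2.pos

theorem coprime_primeProd_iff :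
    d.Coprime (primeProd a b) ↔ ∀ p, p.Prime → p ∣ d → p < a ∨ b ≤ p := by
  simp only [primeProd, Nat.coprime_prod_right_iff, Finset.mem_filter, Finset.mem_Ico, and_imp]
  refine forall_congr' fun p => ⟨fun h hp hpd => ?_, fun h hap hpb hp => ?_⟩
  · by_contra! hpab
    exact (hp.coprime_iff_not_dvd.1 (h hpab.1 hpab.2 hp).symm) hpd
  · exact (hp.coprime_iff_not_dvd.2 fun hpd => by have := h hp hpd; lia).symm

theorem prime_coprime_primeProd_iff (hp : p.Prime) :
    p.Coprime (primeProd a b) ↔ p < a ∨ b ≤ p := by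
  refine coprime_primeProd_iff.trans ⟨fun h => h p hp dvd_rfl, fun h q hq hqp => ?_⟩
  rwa [(Nat.prime_dvd_prime_iff_eq hq hp).1 hqp]

theorem mem_roughNumbers_max_iff (han : a ≤ n) :
    d ∈ roughNumbers (max b n) ↔ d ∈ roughNumbers n ∧ d.Coprime (primeProd a b) := by
  rw [coprime_primeProd_iff]
  refine ⟨fun hd => ⟨roughNumbers_anti (le_max_right b n) hd, fun p hp hpd =>
    .inr ((le_max_left b n).trans (hd.2 p hp hpd))⟩, fun ⟨hd, hcop⟩ => ⟨hd.1, fun p hp hpd => ?_⟩⟩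
  have hnp := hd.2 p hp hpd
  exact max_le ((hcop p hp hpd).resolve_left (by lia)) hnp

theorem roughSum_principalTwist_primeProd (f : ℕ →* ℝ) (han : a ≤ n) :
    roughSum (principalTwist f (primeProd a b)) n = roughSum f (max b n) := by
  have hset : roughNumbers n ∩ {d | d.Coprime (primeProd a b)} = roughNumbers (max b n) :=
    Set.ext fun d => (mem_roughNumbers_max_iff han).symm
  rw [roughSum, roughSum, tsum_subtype, tsum_subtype, coe_principalTwist, indicator_indicator, hset]

theorem principalTwist_primeProd_of_prime (f : ℕ →* ℝ) (hp : p.Prime) :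
    principalTwist f (primeProd a b) p = if p < a ∨ b ≤ p then f p else 0 := by
  rw [coe_principalTwist, indicator_apply]
  exact if_congr (prime_coprime_primeProd_iff hp) rfl rfl

theorem one_add_principalTwist_primeProd_le_roughSum {f : ℕ →* ℝ} (hf0 : ∀ d, 0 ≤ f d)
    (hf : Summable f) (htouch : ∀ p, p.Prime → b ≤ p → 1 + f p ≤ roughSum f (p + 1))
    (hp : p.Prime) (hap : a ≤ p) :
    1 + principalTwist f (primeProd a b) p ≤
      roughSum (principalTwist f (primeProd a b)) (p + 1) := by
  rw [roughSum_principalTwist_primeProd f (by lia), principalTwist_primeProd_of_prime f hp]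
  split_ifs with hpb
  · have hbp : b ≤ p := by lia
    rw [max_eq_right (by lia)]
    exact htouch p hp hbp
  · rw [add_zero]
    exact one_le_roughSum hf0 hf _

end primeProd

theorem card_connectedComponents_closure_divisorSum_principalTwist {f : ℕ →* ℝ} {p y J : ℕ}
    (hf0 : ∀ d, 0 ≤ f d) (hf : Summable f) (hp : p.Prime) (hpy : p < y)
    (htouch : ∀ q, q.Prime → y ≤ q → 1 + f q ≤ roughSum f (q + 1))
    (hsep : geomSum (f p) J * roughSum f y < geomSum (f p) (J + 1))
    (htouchJ : geomSum (f p) (J + 2) ≤ geomSum (f p) (J + 1) * roughSum f y) :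
    Nat.card (ConnectedComponents ↥(closure
      (divisorSum (principalTwist f (primeProd (p + 1) y)) '' roughNumbers p))) = J + 2 := by
  have hfp : principalTwist f (primeProd (p + 1) y) p = f p := by
    rw [principalTwist_primeProd_of_prime f hp, if_pos (.inl p.lt_succ_self)]
  have hsum : roughSum (principalTwist f (primeProd (p + 1) y)) (p + 1) = roughSum f y := by
    rw [roughSum_principalTwist_primeProd f le_rfl, max_eq_left hpy]
  refine card_connectedComponents_closure_divisorSum (principalTwist_nonneg hf0 _)
    (summable_principalTwist hf _) hp (fun q hq hpq => ?_) ?_ ?_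
  · exact one_add_principalTwist_primeProd_le_roughSum hf0 hf htouch hq hpq
  · rwa [hfp, hsum]
  · rwa [hfp, hsum]

section primes

open Chebyshev

theorem eventually_mul_le_theta {c : ℝ} (hc : c < Real.log 2) :
    ∀ᶠ n : ℕ in atTop, c * n ≤ θ n := by
  set ε : ℝ := (Real.log 2 - c) / 4 with hε
  have hε0 : 0 < ε := by linarith
  have hlog : ∀ᶠ n : ℕ in atTop, Real.log n ≤ ε * √n := by
    have hlittle := (isLittleO_log_rpow_atTop (r := 1 / 2) (by norm_num)).bound hε0
    filter_upwards [tendsto_natCast_atTop_atTop.eventually hlittle] with n hn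
    rw [← Real.sqrt_eq_rpow, Real.norm_of_nonneg (Real.sqrt_nonneg _)] at hn
    exact (le_abs_self _).trans hn
  filter_upwards [hlog, (tendsto_add_atTop_nat 1).eventually hlog, eventually_ge_atTop 1]
    with n hn hn1 hn0
  have hsucc : Real.log (n + 1) ≤ 2 * (ε * n) := by
    have hsqrt : √((n : ℝ) + 1) ≤ n + 1 :=
      Real.sqrt_le_self_iff.2 (.inr (by simp))
    have hn0' : (1 : ℝ) ≤ n := Nat.one_le_cast.2 hn0
    push_cast at hn1
    nlinarith
  have hmul : √n * Real.log n ≤ ε * n := by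
    nlinarith [Real.mul_self_sqrt (Nat.cast_nonneg (α := ℝ) n), Real.sqrt_nonneg n]
  have hcε : c * n = n * Real.log 2 - 4 * (ε * n) := by rw [hε]; ring
  linarith [theta_ge n]

theorem theta_le_add_card_mul_log {m n : ℕ} (hmn : m ≤ n) :
    θ n ≤ θ m + (Finset.Ioc m n |>.filter Nat.Prime).card * Real.log n := by
  have hlog : ∑ p ∈ Finset.Ioc m n with p.Prime, Real.log p ≤
      (Finset.Ioc m n |>.filter Nat.Prime).card * Real.log n := by
    rw [← nsmul_eq_mul]
    refine Finset.sum_le_card_nsmul _ _ _ fun p hp => ?_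
    obtain ⟨hpmn, hp⟩ := Finset.mem_filter.1 hp
    exact Real.log_le_log (Nat.cast_pos.2 hp.pos) (Nat.cast_le.2 (Finset.mem_Ioc.1 hpmn).2)
  rw [theta, theta, Nat.floor_natCast, Nat.floor_natCast,
    ← Finset.Ioc_union_Ioc_eq_Ioc m.zero_le hmn, Finset.filter_union, Finset.sum_union]
  · gcongr
  · exact Finset.disjoint_filter_filter (Finset.Ioc_disjoint_Ioc_of_le le_rfl)

-- The primes in `(n, 4n]` contribute at least `n` to `θ (4n)`, as `4 log 2 - log 4 > 1`, and each
-- of them contributes at most `log (4n) = o(n)`.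
theorem eventually_le_card_primes_Ioc (K : ℕ) :
    ∀ᶠ n : ℕ in atTop, K ≤ (Finset.Ioc n (4 * n) |>.filter Nat.Prime).card := by
  have h4 : Tendsto (fun n : ℕ => 4 * n) atTop atTop := tendsto_id.const_mul_atTop' (by norm_num)
  have hlog4 : Real.log 4 = 2 * Real.log 2 := by
    rw [show (4 : ℝ) = 2 ^ 2 by norm_num, Real.log_pow, Nat.cast_ofNat]
  have hc : (1 + 2 * Real.log 2) / 4 < Real.log 2 := by linarith [Real.log_two_gt_d9]
  have hlog : ∀ᶠ n : ℕ in atTop, K * Real.log n ≤ 1 / 4 * n := by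
    have hlittle := (Real.isLittleO_log_id_atTop.const_mul_left (K : ℝ)).bound
      (show (0 : ℝ) < 1 / 4 by norm_num)
    filter_upwards [tendsto_natCast_atTop_atTop.eventually hlittle] with n hn
    simp only [id, Real.norm_natCast] at hn
    exact (le_abs_self _).trans hn
  filter_upwards [h4.eventually (eventually_mul_le_theta hc), h4.eventually hlog,
    eventually_ge_atTop 1] with n hθ hn hn1
  have hlogpos : 0 < Real.log (4 * n : ℕ) := Real.log_pos (Nat.one_lt_cast.2 (by lia))
  have hcard := theta_le_add_card_mul_log (show n ≤ 4 * n by lia)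
  have hθn := theta_le_log4_mul_x (Nat.cast_nonneg (α := ℝ) n)
  have hcast : ((4 * n : ℕ) : ℝ) = 4 * n := by push_cast; ring
  rw [hlog4] at hθn
  rw [← Nat.cast_le (α := ℝ)]
  refine le_of_mul_le_mul_right ?_ hlogpos
  calc K * Real.log (4 * n : ℕ) ≤ n := by linarith
    _ = (1 + 2 * Real.log 2) / 4 * (4 * n : ℕ) - 2 * Real.log 2 * n := by rw [hcast]; ring
    _ ≤ θ (4 * n : ℕ) - θ n := by linarith
    _ ≤ _ := by linarith

end primes

/-- The completely multiplicative function `d ↦ d ^ (-r)`, the real counterpart of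
`riemannZetaSummandHom`. -/
noncomputable def zetaSummand (r : ℝ) : ℕ →* ℝ where
  toFun d := (d : ℝ) ^ (-r)
  map_one' := by simp
  map_mul' d k := by rw [Nat.cast_mul, Real.mul_rpow d.cast_nonneg k.cast_nonneg]

section zetaSummand

variable {r : ℝ}

theorem zetaSummand_nonneg (r : ℝ) (d : ℕ) : 0 ≤ zetaSummand r d :=
  Real.rpow_nonneg d.cast_nonneg _

theorem zetaSummand_pos (r : ℝ) {d : ℕ} (hd : 0 < d) : 0 < zetaSummand r d :=
  Real.rpow_pos_of_pos (Nat.cast_pos.2 hd) _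

theorem summable_zetaSummand (hr : 1 < r) : Summable (zetaSummand r) :=
  Real.summable_nat_rpow.2 (neg_lt_neg hr)

theorem zetaSummand_le_of_le (hr : 0 ≤ r) {d k : ℕ} (hd : 0 < d) (hdk : d ≤ k) :
    zetaSummand r k ≤ zetaSummand r d :=
  Real.rpow_le_rpow_of_nonpos (Nat.cast_pos.2 hd) (Nat.cast_le.2 hdk) (neg_nonpos.2 hr)

theorem zetaSummand_two_lt_half (hr : 1 < r) : zetaSummand r 2 < 1 / 2 := by
  calc zetaSummand r 2 < (2 : ℝ) ^ (-1 : ℝ) :=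
        Real.rpow_lt_rpow_of_exponent_lt one_lt_two (neg_lt_neg hr)
    _ = 1 / 2 := by rw [Real.rpow_neg_one, one_div]

theorem eventually_one_add_zetaSummand_le_roughSum (hr : 1 < r) :
    ∀ᶠ n : ℕ in atTop, 1 + zetaSummand r n ≤ roughSum (zetaSummand r) (n + 1) := by
  filter_upwards [eventually_le_card_primes_Ioc ⌈(zetaSummand r 4)⁻¹⌉₊] with n hcard
  set P := (Finset.Ioc n (4 * n)).filter Nat.Prime with hP
  have hmemP : ∀ p ∈ P, (n < p ∧ p ≤ 4 * n) ∧ p.Prime := fun p hp => by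
    simpa only [hP, Finset.mem_filter, Finset.mem_Ioc] using hp
  have h1P : 1 ∉ P := fun h1 => Nat.not_prime_one (hmemP 1 h1).2
  have hrough : (↑(insert 1 P) : Set ℕ) ⊆ roughNumbers (n + 1) := by
    rw [Finset.coe_insert, insert_subset_iff]
    exact ⟨one_mem_roughNumbers _, fun p hp =>
      prime_mem_roughNumbers (hmemP p hp).2 (hmemP p hp).1.1⟩
  have hsum : zetaSummand r n ≤ ∑ p ∈ P, zetaSummand r p :=
    calc zetaSummand r n = (zetaSummand r 4)⁻¹ * zetaSummand r (4 * n) := by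
          rw [map_mul, inv_mul_cancel_left₀ (zetaSummand_pos r four_pos).ne']
      _ ≤ P.card * zetaSummand r (4 * n) := by
          gcongr
          · exact zetaSummand_nonneg _ _
          · exact Nat.ceil_le.1 hcard
      _ ≤ ∑ p ∈ P, zetaSummand r p := by
          rw [← nsmul_eq_mul]
          refine Finset.card_nsmul_le_sum _ _ _ fun p hp => ?_
          obtain ⟨⟨-, hp4⟩, hp⟩ := hmemP p hp
          exact zetaSummand_le_of_le (by linarith) hp.pos hp4
  calc 1 + zetaSummand r n ≤ ∑ d ∈ insert 1 P, zetaSummand r d := by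
        rw [Finset.sum_insert h1P, map_one]
        gcongr
    _ ≤ roughSum (zetaSummand r) (n + 1) :=
        sum_le_roughSum (zetaSummand_nonneg r) (summable_zetaSummand hr) hrough

theorem eventually_zetaSummand_two_mul_roughSum_sub_one_le (hr : 1 < r) :
    ∀ᶠ n : ℕ in atTop, zetaSummand r 2 * (roughSum (zetaSummand r) n - 1) ≤
      roughSum (zetaSummand r) (n + 1) - 1 := by
  have hf0 := zetaSummand_nonneg r
  have hf := summable_zetaSummand hr
  have hgap : 0 < 1 - 2 * zetaSummand r 2 := by linarith [zetaSummand_two_lt_half hr]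
  filter_upwards [eventually_one_add_zetaSummand_le_roughSum hr,
    hf.tendsto_atTop_zero.eventually_lt_const hgap] with n hn hsmall
  exact mul_roughSum_sub_one_le hf0 hf hn (hf0 2) (by linarith)

end zetaSummand

theorem sigmaQ_one (r : ℝ) (m k : ℕ) :
    sigmaQ (1 : DirichletCharacter ℂ m) r k =
      (divisorSum (principalTwist (zetaSummand r) m) k : ℝ) := by
  rw [sigmaQ, divisorSum, Complex.ofReal_sum]
  refine Finset.sum_congr rfl fun d _ => ?_
  rw [coe_principalTwist, indicator_apply]
  by_cases hd : d ∈ {d : ℕ | d.Coprime m}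
  · rw [if_pos hd, MulChar.one_apply ((ZMod.isUnit_iff_coprime d m).2 hd), one_mul]
    rfl
  · rw [if_neg hd,
      MulChar.map_nonunit _ fun hu => hd ((ZMod.isUnit_iff_coprime d m).1 hu), zero_mul,
      Complex.ofReal_zero]

theorem card_connectedComponents_closure_sigmaQ (r : ℝ) (m : ℕ) (s : Set ℕ) :
    Nat.card (ConnectedComponents ↥(closure (sigmaQ (1 : DirichletCharacter ℂ m) r '' s))) =
      Nat.card (ConnectedComponents
        ↥(closure (divisorSum (principalTwist (zetaSummand r) m) '' s))) := by
  have himage : sigmaQ (1 : DirichletCharacter ℂ m) r '' s =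
      Complex.ofReal '' (divisorSum (principalTwist (zetaSummand r) m) '' s) := by
    rw [image_image]
    exact image_congr fun k _ => sigmaQ_one r m k
  have hemb := Complex.isometry_ofReal.isClosedEmbedding
  rw [himage, hemb.closure_image_eq, card_connectedComponents_image hemb.isEmbedding]

/-- For fixed `r > 1`, every sufficiently large positive integer is the number of connected
components of the closure of the image of `σ_{r,ℚ,χ}` for some Dirichlet character `χ`. -/
theorem stmt1 (r : ℝ) (hr : 1 < r) :
    ∃ N : ℕ, 0 < N ∧ ∀ n : ℕ, N ≤ n →
      ∃ (m : ℕ) (χ : DirichletCharacter ℂ m), 0 < m ∧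
        Nat.card (ConnectedComponents
          ↥(closure (sigmaQ χ r '' {k : ℕ | 0 < k}))) = n := by
  have hf0 := zetaSummand_nonneg r
  have hf := summable_zetaSummand hr
  have hx1 : zetaSummand r 2 < 1 := by linarith [zetaSummand_two_lt_half hr]
  have hlim : Tendsto (roughSum (zetaSummand r)) atTop (𝓝 1) :=
    map_one (zetaSummand r) ▸ tendsto_roughSum hf
  have hgt : ∀ y, 1 < roughSum (zetaSummand r) y := fun y => by
    obtain ⟨p, hyp, hp⟩ := y.exists_infinite_primes
    exact one_lt_roughSum hf0 hf hp hyp (zetaSummand_pos r hp.pos)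
  obtain ⟨y₀, hy₀⟩ := eventually_atTop.1 ((eventually_gt_atTop 2).and
    ((eventually_one_add_zetaSummand_le_roughSum hr).and
      (eventually_zetaSummand_two_mul_roughSum_sub_one_le hr)))
  obtain ⟨N, hN⟩ := exists_geomSum_mul_lt_and_le_mul (zetaSummand_pos r two_pos) hx1 hlim
    (fun y _ => hgt y) fun y hy => (hy₀ y hy).2.2
  refine ⟨N + 2, by lia, fun n hn => ?_⟩
  obtain ⟨y, hy, hsep, htouch⟩ := hN (n - 2) (by lia)
  refine ⟨primeProd 3 y, 1, primeProd_pos 3 y, ?_⟩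
  rw [card_connectedComponents_closure_sigmaQ, ← roughNumbers_two,
    card_connectedComponents_closure_divisorSum_principalTwist hf0 hf Nat.prime_two (hy₀ y hy).1
      (fun q _ hyq => (hy₀ q (hy.trans hyq)).2.1) hsep htouch]
  lia
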